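/- Let (R, m) be a Noetherian local ring, M a finitely generated R-module of dimension d, and x_1, ..., x_r a part of a system of parameters of M (i.e. a sequence that can be extended to a full system of parameters x_1, ..., x_d of M). Then H^r_{(x_1, ..., x_r)}(M) ≠ 0. -/

import Mathlib

/-!
Local cohomology is computed as `H^i_J(M) = colim Ext^i(R/J^n, M)`. Embedding `M` into an injective
module shows that `H^i_J(M) = H^{i+1}_J(M) = 0` implies `H^{i+1}_{J + (x)}(M) = 0`. As cohomology
with support in an ideal generated by `n` elements vanishes above degree `n`, a vanishing
`H^r_{(x₁, …, x_r)}(M) = 0` would survive the adjunction of `x_{r+1}, …, x_d` one by one and give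
`H^d_{(x₁, …, x_d)}(M) = 0`. This contradicts Grothendieck's nonvanishing theorem. The latter holds
by induction on `d`: after dividing by the torsion, choose an `M`-regular element `y` outside the
nonmaximal attached primes of the Artinian module `H^{d-1}(M)`. If `H^d(M) = 0`, then
`H^{d-1}(M/yM) = H^{d-1}(M)/y H^{d-1}(M)` is finitely generated, and a finitely generated top local
cohomology module in positive degree is zero by Nakayama's lemma.
-/

open IsLocalRing

universe u

/-- The dimension of a module `M`: the Krull dimension of `R ⧸ Ann M`. -/
noncomputable def moduleDim (R M : Type*) [CommRing R] [AddCommGroup M] [Module R M] :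
    WithBot ℕ∞ :=
  ringKrullDim (R ⧸ Module.annihilator R M)

/-- A system of parameters of a `d`-dimensional module `M` over a Noetherian local ring:
a sequence of `d` elements of the maximal ideal such that `M/(x₁, …, x_d)M` has finite
length. -/
def IsSystemOfParameters {R : Type*} [CommRing R] [IsLocalRing R] (M : Type*)
    [AddCommGroup M] [Module R M] {d : ℕ} (x : Fin d → R) : Prop :=
  (∀ i, x i ∈ maximalIdeal R) ∧
    IsFiniteLength R (M ⧸ (Ideal.span (Set.range x) • (⊤ : Submodule R M)))

/-! ### Local cohomology as a direct limit of `Ext` modules -/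

theorem directLimit_map_exact {R ι : Type*} [Semiring R] [Preorder ι] [IsDirectedOrder ι]
    [Nonempty ι] [DecidableEq ι] {G G' G'' : ι → Type*} [∀ i, AddCommGroup (G i)]
    [∀ i, AddCommGroup (G' i)] [∀ i, AddCommGroup (G'' i)] [∀ i, Module R (G i)]
    [∀ i, Module R (G' i)] [∀ i, Module R (G'' i)] {f : ∀ i j, i ≤ j → G i →ₗ[R] G j}
    {f' : ∀ i j, i ≤ j → G' i →ₗ[R] G' j} {f'' : ∀ i j, i ≤ j → G'' i →ₗ[R] G'' j}
    [DirectedSystem G'' fun i j h => f'' i j h]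
    {g : ∀ i, G i →ₗ[R] G' i} (hg : ∀ i j h, g j ∘ₗ f i j h = f' i j h ∘ₗ g i)
    {g' : ∀ i, G' i →ₗ[R] G'' i} (hg' : ∀ i j h, g' j ∘ₗ f' i j h = f'' i j h ∘ₗ g' i)
    (hexact : ∀ i, Function.Exact (g i) (g' i)) :
    Function.Exact (Module.DirectLimit.map g hg) (Module.DirectLimit.map g' hg') := by
  refine fun z => ⟨fun hz => ?_, ?_⟩
  · obtain ⟨i, x, rfl⟩ := Module.DirectLimit.exists_of z
    rw [Module.DirectLimit.map_apply_of] at hz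
    obtain ⟨j, hij, hx⟩ := Module.DirectLimit.of.zero_exact hz
    rw [← LinearMap.comp_apply, ← hg', LinearMap.comp_apply] at hx
    obtain ⟨w, hw⟩ := (hexact j _).1 hx
    exact ⟨Module.DirectLimit.of R ι G f j w, by
      rw [Module.DirectLimit.map_apply_of, hw, Module.DirectLimit.of_f]⟩
  · rintro ⟨w, rfl⟩
    obtain ⟨i, x, rfl⟩ := Module.DirectLimit.exists_of w
    rw [Module.DirectLimit.map_apply_of, Module.DirectLimit.map_apply_of,
      (hexact i).apply_apply_eq_zero, map_zero]

section Construction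

open CategoryTheory Abelian

variable {R : Type u} [CommRing R] (J : Ideal R)

/-- The cyclic module `R ⧸ J ^ n` as an object of the category of modules. -/
noncomputable abbrev quotPow (n : ℕ) : ModuleCat.{u} R := ModuleCat.of R (R ⧸ J ^ n)

/-- The projection `R ⧸ J ^ n → R ⧸ J ^ m` for `m ≤ n`, as a morphism of modules. -/
noncomputable def quotPowMap {m n : ℕ} (h : m ≤ n) : quotPow J n ⟶ quotPow J m :=
  ModuleCat.ofHom (Submodule.factor (Ideal.pow_le_pow_right h))

theorem quotPowMap_refl (n : ℕ) : quotPowMap J (le_refl n) = 𝟙 _ := by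
  ext
  rfl

theorem quotPowMap_comp {l m n : ℕ} (h : l ≤ m) (h' : m ≤ n) :
    quotPowMap J h' ≫ quotPowMap J h = quotPowMap J (h.trans h') := by
  ext
  rfl

variable (i : ℕ) (M : Type u) [AddCommGroup M] [Module R M]

/-- The transition maps of the direct system `n ↦ Ext^i(R ⧸ J ^ n, M)`. -/
noncomputable def extTransition (m n : ℕ) (h : m ≤ n) :
    Ext (quotPow J m) (ModuleCat.of R M) i →ₗ[R] Ext (quotPow J n) (ModuleCat.of R M) i :=
  Ext.precompOfLinear (Ext.mk₀ (quotPowMap J h)) R _ (zero_add i)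

theorem extTransition_apply {m n : ℕ} (h : m ≤ n) (x : Ext (quotPow J m) (ModuleCat.of R M) i) :
    extTransition J i M m n h x = (Ext.mk₀ (quotPowMap J h)).comp x (zero_add i) := rfl

instance : DirectedSystem (fun n => Ext (quotPow J n) (ModuleCat.of R M) i)
    (fun m n h => extTransition J i M m n h) where
  map_self n x := by
    rw [extTransition_apply, quotPowMap_refl, Ext.mk₀_id_comp]
  map_map l m n h h' x := by
    simp only [extTransition_apply]
    rw [← quotPowMap_comp J h h', Ext.mk₀_comp_mk₀_assoc]

/-- The local cohomology module `H^i_J(M) = colim_n Ext^i(R ⧸ J ^ n, M)`. Unlike in Mathlib's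
`localCohomology`, the `Ext` is the one of the derived category, for which long exact sequences are
available. -/
abbrev LocalCoh : Type u :=
  Module.DirectLimit (fun n => Ext (quotPow J n) (ModuleCat.of R M) i) (extTransition J i M)

namespace LocalCoh

/-- The canonical map `Ext^i(R ⧸ J ^ n, M) → H^i_J(M)`. -/
noncomputable abbrev of (n : ℕ) : Ext (quotPow J n) (ModuleCat.of R M) i →ₗ[R] LocalCoh J i M :=
  Module.DirectLimit.of R ℕ _ (extTransition J i M) n

variable {J i M}

theorem of_comp_quotPowMap {m n : ℕ} (h : m ≤ n) (x : Ext (quotPow J m) (ModuleCat.of R M) i) :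
    of J i M n ((Ext.mk₀ (quotPowMap J h)).comp x (zero_add i)) = of J i M m x :=
  Module.DirectLimit.of_f (hij := h)

theorem exists_of (z : LocalCoh J i M) : ∃ n x, of J i M n x = z :=
  Module.DirectLimit.exists_of z

variable {N P : Type u} [AddCommGroup N] [Module R N] [AddCommGroup P] [Module R P]

theorem postcompOfLinear_comp_extTransition {a j : ℕ}
    (β : Ext (ModuleCat.of R M) (ModuleCat.of R N) a) (h : i + a = j) (m n : ℕ) (hmn : m ≤ n) :
    Ext.postcompOfLinear β R (quotPow J n) h ∘ₗ extTransition J i M m n hmn =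
      extTransition J j N m n hmn ∘ₗ Ext.postcompOfLinear β R (quotPow J m) h := by
  ext x
  simp only [LinearMap.comp_apply, LinearMap.flip_apply, Ext.bilinearCompOfLinear_apply_apply,
    extTransition_apply]
  exact Ext.comp_assoc _ _ _ _ _ (by omega)

/-- The map `H^i_J(M) → H^{i+a}_J(N)` given by composition with a class in `Ext^a(M, N)`. -/
noncomputable def postcomp (J : Ideal R) {a i j : ℕ}
    (β : Ext (ModuleCat.of R M) (ModuleCat.of R N) a) (h : i + a = j) :
    LocalCoh J i M →ₗ[R] LocalCoh J j N :=
  Module.DirectLimit.map (fun n => Ext.postcompOfLinear β R (quotPow J n) h)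
    (postcompOfLinear_comp_extTransition β h)

/-- The map induced on local cohomology by a linear map. -/
noncomputable def map (J : Ideal R) (i : ℕ) (f : M →ₗ[R] N) :
    LocalCoh J i M →ₗ[R] LocalCoh J i N :=
  postcomp J (Ext.mk₀ (ModuleCat.ofHom f)) (add_zero i)

theorem map_of (J : Ideal R) (i : ℕ) (f : M →ₗ[R] N) (n : ℕ)
    (x : Ext (quotPow J n) (ModuleCat.of R M) i) :
    map J i f (of J i M n x) =
      of J i N n (x.comp (Ext.mk₀ (ModuleCat.ofHom f)) (add_zero i)) :=
  Module.DirectLimit.map_apply_of _ (postcompOfLinear_comp_extTransition _ _) _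

theorem map_smul_id (J : Ideal R) (i : ℕ) (y : R) :
    map J i (y • LinearMap.id : M →ₗ[R] M) = y • LinearMap.id := by
  ext n x
  change map J i _ (of J i M n x) = (y • LinearMap.id : _ →ₗ[R] _) (of J i M n x)
  rw [map_of, LinearMap.smul_apply, LinearMap.id_apply, ← map_smul, Ext.smul_eq_comp_mk₀]
  rfl

protected theorem map_zero (J : Ideal R) (i : ℕ) : map J i (0 : M →ₗ[R] N) = 0 := by
  ext n x
  change map J i _ (of J i M n x) = 0
  rw [map_of, ModuleCat.ofHom_zero, Ext.mk₀_zero, Ext.comp_zero, map_zero]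

section LongExactSequence

variable {f : M →ₗ[R] N} {g : N →ₗ[R] P} (hf : Function.Injective f) (hfg : Function.Exact f g)
  (hg : Function.Surjective g)

include hf hfg hg in
theorem shortExact_of_exact :
    (ModuleCat.shortComplexOfCompEqZero f g hfg.linearMap_comp_eq_zero).ShortExact :=
  ModuleCat.shortComplex_shortExact _ hfg hf hg

/-- The connecting homomorphism of the long exact sequence of local cohomology. -/
noncomputable def δ (J : Ideal R) (i : ℕ) : LocalCoh J i P →ₗ[R] LocalCoh J (i + 1) M :=
  postcomp J (shortExact_of_exact hf hfg hg).extClass rfl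

include hf hfg hg in
theorem exact_map_map (J : Ideal R) (i : ℕ) : Function.Exact (map J i f) (map J i g) :=
  directLimit_map_exact (postcompOfLinear_comp_extTransition _ _)
    (postcompOfLinear_comp_extTransition _ _) fun n =>
      (ShortComplex.ab_exact_iff_function_exact _).1
        (Ext.covariant_sequence_exact₂' (quotPow J n) (shortExact_of_exact hf hfg hg) i)

theorem exact_map_δ (J : Ideal R) (i : ℕ) : Function.Exact (map J i g) (δ hf hfg hg J i) :=
  directLimit_map_exact (postcompOfLinear_comp_extTransition _ _)
    (postcompOfLinear_comp_extTransition _ _) fun n =>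
      (ShortComplex.ab_exact_iff_function_exact _).1
        (Ext.covariant_sequence_exact₃' (quotPow J n) (shortExact_of_exact hf hfg hg) i _ rfl)

theorem exact_δ_map (J : Ideal R) (i : ℕ) :
    Function.Exact (δ hf hfg hg J i) (map J (i + 1) f) :=
  directLimit_map_exact (postcompOfLinear_comp_extTransition _ _)
    (postcompOfLinear_comp_extTransition _ _) fun n =>
      (ShortComplex.ab_exact_iff_function_exact _).1
        (Ext.covariant_sequence_exact₁' (quotPow J n) (shortExact_of_exact hf hfg hg) i _ rfl)

end LongExactSequence

end LocalCoh
end Construction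

theorem mem_primaryComponent {R M : Type*} [CommRing R] [AddCommGroup M] [Module R M]
    {J : Ideal R} {u : M} : u ∈ J.primaryComponent M ↔ ∃ n, ∀ a ∈ J ^ n, a • u = 0 := by
  simp [Ideal.primaryComponent_mem]

namespace LocalCoh

open CategoryTheory Abelian

variable {R : Type u} [CommRing R] {J : Ideal R} {i : ℕ} {M : Type u} [AddCommGroup M]
  [Module R M] {N : Type u} [AddCommGroup N] [Module R N]

theorem subsingleton_of_forall_of_eq_zero (h : ∀ n x, of J i M n x = 0) :
    Subsingleton (LocalCoh J i M) := by
  refine subsingleton_of_forall_eq 0 fun z => ?_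
  obtain ⟨n, x, rfl⟩ := exists_of z
  exact h n x

theorem subsingleton_of_injective (J : Ideal R) (i : ℕ) (E : Type u) [AddCommGroup E]
    [Module R E] [Module.Injective R E] : Subsingleton (LocalCoh J (i + 1) E) := by
  have : Injective (ModuleCat.of R E) := Module.injective_object_of_injective_module R E
  exact subsingleton_of_forall_of_eq_zero fun n x => by
    rw [Ext.eq_zero_of_injective x, map_zero]

/-- For the zero ideal the direct system is eventually `Ext^i(R, M)`, and `R` is projective. -/
theorem subsingleton_bot (i : ℕ) (M : Type u) [AddCommGroup M] [Module R M] :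
    Subsingleton (LocalCoh (⊥ : Ideal R) (i + 1) M) := by
  refine subsingleton_of_forall_of_eq_zero fun n x => ?_
  have : Module.Projective R (R ⧸ (⊥ : Ideal R) ^ (n + 1)) :=
    Module.Projective.of_equiv
      (Submodule.quotEquivOfEqBot _ (Ideal.bot_pow n.succ_ne_zero)).symm
  have : Projective (quotPow (⊥ : Ideal R) (n + 1)) := (IsProjective.iff_projective _).1 this
  rw [← of_comp_quotPowMap n.le_succ x,
    Ext.eq_zero_of_projective (P := quotPow (⊥ : Ideal R) (n + 1)) (Ext.comp _ x _), map_zero]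

theorem smul_ext_quotPow_eq_zero {n : ℕ} {a : R} (ha : a ∈ J ^ n)
    (x : Ext (quotPow J n) (ModuleCat.of R M) i) : a • x = 0 := by
  have h : a • 𝟙 (quotPow J n) = 0 := by
    rw [← Ideal.annihilator_quotient (I := J ^ n),
      Module.mem_annihilator_iff_lsmul_eq_zero] at ha
    rw [← ModuleCat.lsmul_eq_smul_id, ha, ModuleCat.ofHom_zero]
  rw [← Ext.mk₀_id_comp x, ← Ext.smul_comp, ← Ext.mk₀_smul, h, Ext.mk₀_zero, Ext.zero_comp]

theorem primaryComponent_eq_top (J : Ideal R) (i : ℕ) (M : Type u) [AddCommGroup M]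
    [Module R M] : J.primaryComponent (LocalCoh J i M) = ⊤ := by
  refine (Submodule.eq_top_iff').2 fun z => ?_
  obtain ⟨n, x, rfl⟩ := exists_of z
  exact mem_primaryComponent.2 ⟨n, fun a ha => by
    rw [← map_smul, smul_ext_quotPow_eq_zero ha, map_zero]⟩

theorem annihilator_le (J : Ideal R) (i : ℕ) (M : Type u) [AddCommGroup M] [Module R M] :
    Module.annihilator R M ≤ Module.annihilator R (LocalCoh J i M) := by
  intro a ha
  have h : (a • LinearMap.id : M →ₗ[R] M) = 0 :=
    LinearMap.ext fun u => Module.mem_annihilator.1 ha u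
  refine Module.mem_annihilator.2 fun z => ?_
  rw [← LinearMap.id_apply (R := R) z, ← LinearMap.smul_apply, ← map_smul_id, h,
    LocalCoh.map_zero, LinearMap.zero_apply]

section DegreeZero

/-- Evaluation at `1` of a class in `Ext^0(R ⧸ J ^ n, M)`. -/
noncomputable def evalOne (J : Ideal R) (n : ℕ) (M : Type u) [AddCommGroup M] [Module R M] :
    Ext (quotPow J n) (ModuleCat.of R M) 0 →ₗ[R] M :=
  LinearMap.applyₗ (Submodule.Quotient.mk 1) ∘ₗ
    (Ext.linearEquiv₀ ≪≫ₗ ModuleCat.homLinearEquiv).toLinearMap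

theorem evalOne_mk₀ (n : ℕ) (f : quotPow J n ⟶ ModuleCat.of R M) :
    evalOne J n M (Ext.mk₀ f) = f.hom (Submodule.Quotient.mk 1) := by
  change (Ext.linearEquiv₀ (R := R) (Ext.mk₀ f)).hom _ = _
  rw [← Ext.linearEquiv₀_symm_apply (R := R), LinearEquiv.apply_symm_apply]

theorem evalOne_injective (J : Ideal R) (n : ℕ) (M : Type u) [AddCommGroup M] [Module R M] :
    Function.Injective (evalOne J n M) := by
  refine (injective_iff_map_eq_zero _).2 fun x hx => ?_
  obtain ⟨f, rfl⟩ := Ext.homEquiv₀.symm.surjective x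
  have hf : f = 0 := by
    ext
    exact (evalOne_mk₀ n f).symm.trans hx
  rw [hf]
  exact Ext.mk₀_zero _ _

theorem evalOne_extTransition {m n : ℕ} (h : m ≤ n)
    (x : Ext (quotPow J m) (ModuleCat.of R M) 0) :
    evalOne J n M (extTransition J 0 M m n h x) = evalOne J m M x := by
  obtain ⟨f, rfl⟩ := Ext.homEquiv₀.symm.surjective x
  rw [extTransition_apply, Ext.homEquiv₀_symm_apply, Ext.mk₀_comp_mk₀, evalOne_mk₀, evalOne_mk₀]
  rfl

/-- The evaluation map `H^0_J(M) → M`, an isomorphism onto the `J`-primary component. -/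
noncomputable def ι (J : Ideal R) (M : Type u) [AddCommGroup M] [Module R M] :
    LocalCoh J 0 M →ₗ[R] M :=
  Module.DirectLimit.lift R ℕ _ (extTransition J 0 M) (fun n => evalOne J n M)
    fun _ _ => evalOne_extTransition

theorem ι_of_mk₀ (n : ℕ) (f : quotPow J n ⟶ ModuleCat.of R M) :
    ι J M (of J 0 M n (Ext.mk₀ f)) = f.hom (Submodule.Quotient.mk 1) :=
  (Module.DirectLimit.lift_of _ _ _).trans (evalOne_mk₀ n f)

theorem ι_injective (J : Ideal R) (M : Type u) [AddCommGroup M] [Module R M] :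
    Function.Injective (ι J M) :=
  Module.DirectLimit.lift_injective _ _ fun n => evalOne_injective J n M

theorem ι_comp_map (J : Ideal R) (f : M →ₗ[R] N) : ι J N ∘ₗ map J 0 f = f ∘ₗ ι J M := by
  ext n x
  obtain ⟨g, rfl⟩ := Ext.homEquiv₀.symm.surjective x
  change ι J N (map J 0 f (of J 0 M n (Ext.mk₀ g))) = f (ι J M (of J 0 M n (Ext.mk₀ g)))
  rw [map_of, Ext.mk₀_comp_mk₀, ι_of_mk₀, ι_of_mk₀]
  rfl

theorem range_ι (J : Ideal R) (M : Type u) [AddCommGroup M] [Module R M] :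
    LinearMap.range (ι J M) = J.primaryComponent M := by
  ext u
  constructor
  · rintro ⟨z, rfl⟩
    exact J.primaryComponent_map_mem _ ⟨z, primaryComponent_eq_top J 0 M ▸ Submodule.mem_top⟩
  · intro hu
    obtain ⟨n, hn⟩ := mem_primaryComponent.1 hu
    let g : (R ⧸ J ^ n) →ₗ[R] M :=
      Submodule.liftQ (J ^ n) (LinearMap.toSpanSingleton R M u) fun a ha => hn a ha
    refine ⟨of J 0 M n (Ext.mk₀ (ModuleCat.ofHom g)), ?_⟩
    rw [ι_of_mk₀]
    exact (Submodule.liftQ_apply _ _ _).trans (one_smul R u)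

theorem subsingleton_zero_iff : Subsingleton (LocalCoh J 0 M) ↔ J.primaryComponent M = ⊥ := by
  rw [← range_ι, ← Submodule.subsingleton_iff_eq_bot]
  exact (LinearEquiv.ofInjective _ (ι_injective J M)).toEquiv.subsingleton_congr

end DegreeZero
end LocalCoh

/-! ### Comparison with `localCohomology` -/

section Comparison

open CategoryTheory Abelian Opposite Limits

variable {R : Type u} [CommRing R]

/-- The functor `Hom(-, Y)` with values in the opposite category of modules. -/
noncomputable abbrev homFunctor (Y : ModuleCat.{u} R) : ModuleCat.{u} R ⥤ (ModuleCat.{u} R)ᵒᵖ :=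
  ((linearYoneda R (ModuleCat.{u} R)).obj Y).rightOp

/-- A morphism `X ⟶ Y`, seen as a point `R ⟶ Hom(X, Y)` of the module of morphisms, reversed in the
opposite category. -/
noncomputable def homPoint {X Y : ModuleCat.{u} R} :
    (X ⟶ Y) ≃+ ((homFunctor Y).obj X ⟶ op (ModuleCat.of R R)) where
  toFun f := (ModuleCat.ofHom (LinearMap.toSpanSingleton R (X ⟶ Y) f)).op
  invFun t := t.unop.hom (1 : R)
  left_inv f := one_smul R f
  right_inv _ := Quiver.Hom.unop_inj (ModuleCat.hom_ext (LinearMap.ext_ring (one_smul R _)))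
  map_add' f g :=
    Quiver.Hom.unop_inj (ModuleCat.hom_ext (LinearMap.ext_ring (smul_add (1 : R) f g)))

theorem homFunctor_map_comp_homPoint {X X' Y : ModuleCat.{u} R} (g : X' ⟶ X) (f : X ⟶ Y) :
    (homFunctor Y).map g ≫ homPoint f = homPoint (g ≫ f) :=
  Quiver.Hom.unop_inj (ModuleCat.hom_ext (LinearMap.ext_ring (Linear.comp_smul _ _ _ g (1 : R) f)))

theorem homFunctor_map_comp_homPoint_eq_zero {X X' Y : ModuleCat.{u} R} {g : X' ⟶ X} {f : X ⟶ Y}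
    (h : g ≫ f = 0) : (homFunctor Y).map g ≫ homPoint f = 0 := by
  rw [homFunctor_map_comp_homPoint, h, map_zero]

instance : Injective (op (ModuleCat.of R R)) := by
  have : Projective (ModuleCat.of R R) := (IsProjective.iff_projective _).1 inferInstance
  infer_instance

variable {X Y : ModuleCat.{u} R} (P : ProjectiveResolution X) {n : ℕ}

/-- The point of the `n`-th left derived functor of `Hom(-, Y)` given by a cocycle `P_n ⟶ Y`. -/
noncomputable def derivedPoint (f : P.complex.X n ⟶ Y) (hf : P.complex.d (n + 1) n ≫ f = 0) :
    ((homFunctor Y).leftDerived n).obj X ⟶ op (ModuleCat.of R R) :=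
  (P.isoLeftDerivedObj (homFunctor Y) n).hom ≫
    HomologicalComplex.homologyι _ n ≫
      HomologicalComplex.descOpcycles _ (homPoint f) (n + 1) (by simp)
        (homFunctor_map_comp_homPoint_eq_zero hf)

theorem leftDerived_map_comp_derivedPoint {X' : ModuleCat.{u} R} {P' : ProjectiveResolution X'}
    (f : P.complex.X n ⟶ Y) (hf : P.complex.d (n + 1) n ≫ f = 0) {g : X' ⟶ X}
    (φ : ProjectiveResolution.Hom P' P g) (hf' : P'.complex.d (n + 1) n ≫ φ.hom.f n ≫ f = 0) :
    ((homFunctor Y).leftDerived n).map g ≫ derivedPoint P f hf =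
      derivedPoint P' (φ.hom.f n ≫ f) hf' := by
  rw [derivedPoint, ProjectiveResolution.isoLeftDerivedObj_hom_naturality_assoc g P' P φ.hom
    φ.hom_f_zero_comp_π_f_zero, derivedPoint]
  congr 1
  refine (HomologicalComplex.homologyι_naturality_assoc
    (((homFunctor Y).mapHomologicalComplex (ComplexShape.down ℕ)).map φ.hom) n _).trans ?_
  congr 1
  rw [← cancel_epi (HomologicalComplex.pOpcycles _ _), HomologicalComplex.p_opcyclesMap_assoc]
  refine (congrArg _ (HomologicalComplex.p_descOpcycles _ _ _ _ _)).trans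
    (Eq.trans ?_ (HomologicalComplex.p_descOpcycles _ _ _ _ _).symm)
  exact homFunctor_map_comp_homPoint _ _

theorem homologyι_comp_descOpcycles_homPoint_eq_zero (f : P.complex.X n ⟶ Y)
    (hf : P.complex.d (n + 1) n ≫ f = 0) (h : derivedPoint P f hf = 0) :
    HomologicalComplex.homologyι _ n ≫ HomologicalComplex.descOpcycles
      (((homFunctor Y).mapHomologicalComplex (ComplexShape.down ℕ)).obj P.complex)
        (homPoint f) (n + 1) (by simp)
      (homFunctor_map_comp_homPoint_eq_zero hf) = 0 := by
  rwa [derivedPoint, ← cancel_epi (P.isoLeftDerivedObj (homFunctor Y) n).inv,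
    Iso.inv_hom_id_assoc, comp_zero] at h

theorem eq_zero_of_derivedPoint_zero_eq_zero (f : P.complex.X 0 ⟶ Y)
    (hf : P.complex.d 1 0 ≫ f = 0) (h : derivedPoint P f hf = 0) : f = 0 := by
  let K := ((homFunctor Y).mapHomologicalComplex (ComplexShape.down ℕ)).obj P.complex
  have : IsIso (K.homologyι 0) := K.isIso_homologyι 0 0 (by simp) (by simp [K])
  have hdesc : K.descOpcycles (homPoint f) 1 (by simp)
      (homFunctor_map_comp_homPoint_eq_zero hf) = 0 := by
    rw [← cancel_epi (K.homologyι 0), comp_zero]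
    exact homologyι_comp_descOpcycles_homPoint_eq_zero P f hf h
  refine homPoint.map_eq_zero_iff.1 ?_
  rw [← K.p_descOpcycles (homPoint f) 1 (by simp) (homFunctor_map_comp_homPoint_eq_zero hf), hdesc]
  exact comp_zero

/-- As `R` is injective in the opposite category, a morphism to `R` that vanishes on the homology
factors through the differential. -/
theorem exists_eq_d_comp_of_derivedPoint_eq_zero (f : P.complex.X (n + 1) ⟶ Y)
    (hf : P.complex.d (n + 2) (n + 1) ≫ f = 0) (h : derivedPoint P f hf = 0) :
    ∃ g : P.complex.X n ⟶ Y, P.complex.d (n + 1) n ≫ g = f := by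
  let K := ((homFunctor Y).mapHomologicalComplex (ComplexShape.down ℕ)).obj P.complex
  let S := ShortComplex.mk (K.homologyι (n + 1)) (K.fromOpcycles (n + 1) n) (by simp)
  have hS : S.Exact :=
    ShortComplex.exact_of_f_is_kernel _ (K.homologyIsKernel (n + 1) n (by simp))
  have hfac := hS.comp_descToInjective _ (homologyι_comp_descOpcycles_homPoint_eq_zero P f hf h)
  obtain ⟨g, hg⟩ := homPoint.surjective
    (hS.descToInjective _ (homologyι_comp_descOpcycles_homPoint_eq_zero P f hf h))
  refine ⟨g, homPoint.injective ?_⟩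
  rw [← homFunctor_map_comp_homPoint, hg]
  refine Eq.trans ?_ ((congrArg (K.pOpcycles (n + 1) ≫ ·) hfac).trans (K.p_descOpcycles _ _ _ _))
  dsimp only [S]
  rw [← Category.assoc, K.p_fromOpcycles]
  rfl

theorem extMk_eq_zero_of_derivedPoint_eq_zero (f : P.complex.X n ⟶ Y)
    (hf : P.complex.d (n + 1) n ≫ f = 0) (h : derivedPoint P f hf = 0) :
    P.extMk f (n + 1) rfl hf = 0 := by
  cases n with
  | zero =>
    obtain rfl := eq_zero_of_derivedPoint_zero_eq_zero P f hf h
    exact P.extMk_zero _ _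
  | succ n =>
    exact (P.extMk_eq_zero_iff f _ rfl hf n rfl).2
      (exists_eq_d_comp_of_derivedPoint_eq_zero P f hf h)

theorem exists_map_eq_zero_of_colimit_ι_eq_zero {D : Type} [SmallCategory D] [IsFiltered D]
    (F : D ⥤ ModuleCat.{u} R ⥤ ModuleCat.{u} R) (Y : ModuleCat.{u} R) (j : D)
    (x : (F.obj j).obj Y) (h : ((colimit.ι F j).app Y).hom x = 0) :
    ∃ (k : D) (a : j ⟶ k), ((F.map a).app Y).hom x = 0 := by
  have hc := isColimitOfPreserves ((evaluation _ _).obj Y) (colimit.isColimit F)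
  have : PreservesFilteredColimitsOfSize.{0, 0} (forget (ModuleCat.{u} R)) :=
    preservesFilteredColimitsOfSize_shrink.{0, u, 0, u} _
  have : PreservesColimit (F ⋙ (evaluation _ _).obj Y) (forget (ModuleCat.{u} R)) :=
    inferInstance
  obtain ⟨k, a, b, hab⟩ := Concrete.isColimit_exists_of_rep_eq _ hc x (0 : (F.obj j).obj Y)
    (h.trans (map_zero _).symm)
  exact ⟨k, a, by simpa using hab.trans (map_zero _)⟩

theorem LocalCoh.subsingleton_of_localCohomology (J : Ideal R) (i : ℕ) (M : Type u)
    [AddCommGroup M] [Module R M]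
    (h : Subsingleton ((localCohomology J i).obj (ModuleCat.of R M))) :
    Subsingleton (LocalCoh J i M) := by
  refine subsingleton_of_forall_of_eq_zero fun n x => ?_
  let P (n : ℕ) : ProjectiveResolution (quotPow J n) := projectiveResolution _
  obtain ⟨f, hf, rfl⟩ := (P n).extMk_surjective x (i + 1) rfl
  let F := localCohomology.diagram (localCohomology.idealPowersDiagram J) i
  obtain ⟨⟨⟨m⟩⟩, a, ha⟩ := exists_map_eq_zero_of_colimit_ι_eq_zero F (ModuleCat.of R M) (op (op n))
    ((derivedPoint (P n) f hf).unop.hom 1) (h.elim _ _)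
  have hnm : n ≤ m := a.unop.unop.down.down
  let φ : ProjectiveResolution.Hom (P m) (P n) (quotPowMap J hnm) :=
    { hom := ProjectiveResolution.lift (quotPowMap J hnm) (P m) (P n)
      hom_f_zero_comp_π_f_zero := ProjectiveResolution.lift_commutes_zero _ _ _ }
  have hf' : (P m).complex.d (i + 1) i ≫ φ.hom.f i ≫ f = 0 := by
    rw [← φ.hom.comm_assoc, hf, comp_zero]
  have hpoint : derivedPoint (P m) (φ.hom.f i ≫ f) hf' = 0 := by
    rw [← leftDerived_map_comp_derivedPoint (P n) f hf φ hf']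
    exact Quiver.Hom.unop_inj (by ext; exact ha)
  rw [← of_comp_quotPowMap hnm, ProjectiveResolution.mk₀_comp_extMk f _ rfl hf φ,
    extMk_eq_zero_of_derivedPoint_eq_zero (P m) _ hf' hpoint, map_zero]

end Comparison

/-! ### Adjoining an element to the support -/

section PrimaryComponent

open scoped Pointwise

variable {R : Type*} [CommRing R] {M : Type*} [AddCommGroup M] [Module R M]

theorem map_primaryComponent_le (J : Ideal R) {N : Type*} [AddCommGroup N] [Module R N]
    (f : M →ₗ[R] N) : (J.primaryComponent M).map f ≤ J.primaryComponent N := by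
  rintro _ ⟨u, hu, rfl⟩
  exact J.primaryComponent_map_mem f ⟨u, hu⟩

theorem comap_primaryComponent_of_injective (J : Ideal R) {N : Type*} [AddCommGroup N]
    [Module R N] {f : M →ₗ[R] N} (hf : Function.Injective f) :
    (J.primaryComponent N).comap f = J.primaryComponent M := by
  ext u
  simp only [Submodule.mem_comap, mem_primaryComponent, ← map_smul, map_eq_zero_iff f hf]

theorem primaryComponent_primaryComponent (J : Ideal R) (M : Type*) [AddCommGroup M] [Module R M] :
    J.primaryComponent (J.primaryComponent M) = ⊤ := by
  rw [← comap_primaryComponent_of_injective J (J.primaryComponent M).subtype_injective,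
    Submodule.comap_subtype_self]

theorem primaryComponent_sup (J K : Ideal R) :
    (J ⊔ K).primaryComponent M = J.primaryComponent M ⊓ K.primaryComponent M := by
  ext u
  simp only [Submodule.mem_inf, mem_primaryComponent]
  constructor
  · rintro ⟨n, hn⟩
    exact ⟨⟨n, fun a ha => hn a (Ideal.pow_right_mono le_sup_left n ha)⟩,
      ⟨n, fun a ha => hn a (Ideal.pow_right_mono le_sup_right n ha)⟩⟩
  · rintro ⟨⟨m, hm⟩, n, hn⟩
    refine ⟨m + n, fun a ha => ?_⟩
    obtain ⟨b, hb, c, hc, rfl⟩ := Submodule.mem_sup.1 (Ideal.sup_pow_add_le_pow_sup_pow ha)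
    rw [add_smul, hm b hb, hn c hc, add_zero]

theorem mem_primaryComponent_span_singleton {x : R} {u : M} :
    u ∈ (Ideal.span {x}).primaryComponent M ↔ ∃ n : ℕ, x ^ n • u = 0 := by
  simp only [mem_primaryComponent, Ideal.span_singleton_pow]
  refine exists_congr fun n => ⟨fun h => h _ (Ideal.mem_span_singleton_self _), fun h a ha => ?_⟩
  obtain ⟨b, rfl⟩ := Ideal.mem_span_singleton'.1 ha
  rw [mul_smul, h, smul_zero]

theorem le_pow_smul_sup {x : R} {P T : Submodule R M} (h : P ≤ x • P ⊔ T) (n : ℕ) :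
    P ≤ x ^ n • P ⊔ T := by
  induction n with
  | zero => exact le_sup_of_le_left (by rw [pow_zero, one_smul])
  | succ n ih =>
    calc P ≤ x ^ n • P ⊔ T := ih
      _ ≤ x ^ n • (x • P ⊔ T) ⊔ T := sup_le_sup_right (smul_mono_right _ h) _
      _ = x ^ (n + 1) • P ⊔ (x ^ n • T ⊔ T) := by
        rw [Submodule.smul_sup', smul_smul, ← pow_succ, sup_assoc]
      _ = x ^ (n + 1) • P ⊔ T := by
        rw [sup_eq_right.2 (Submodule.smul_le_self_of_tower _ T)]

theorem exists_comp_eq_of_ker_le {R : Type u} [CommRing R] {A B E : Type u} [AddCommGroup A]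
    [Module R A] [AddCommGroup B] [Module R B] [AddCommGroup E] [Module R E] [Module.Injective R E]
    {φ : A →ₗ[R] B} {ψ : A →ₗ[R] E} (h : LinearMap.ker φ ≤ LinearMap.ker ψ) :
    ∃ g : B →ₗ[R] E, g ∘ₗ φ = ψ := by
  obtain ⟨g, hg⟩ := Module.Injective.extension_property R E _ _ ((LinearMap.ker φ).liftQ φ le_rfl)
    (LinearMap.ker_eq_bot.1 (Submodule.ker_liftQ_eq_bot _ _ _ le_rfl))
    ((LinearMap.ker φ).liftQ ψ h)
  refine ⟨g, ?_⟩
  rw [← (LinearMap.ker φ).liftQ_mkQ φ le_rfl, ← LinearMap.comp_assoc, hg, Submodule.liftQ_mkQ]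

theorem exists_injective_linearMap_to_injective (R : Type u) [CommRing R] (M : Type u)
    [AddCommGroup M] [Module R M] :
    ∃ (E : Type u) (_ : AddCommGroup E) (_ : Module R E) (_ : Module.Injective R E)
      (f : M →ₗ[R] E), Function.Injective f := by
  open CategoryTheory in
  let E : ModuleCat.{u} R := Injective.under (ModuleCat.of R M)
  have : Injective (ModuleCat.of R E) := inferInstanceAs (Injective E)
  exact ⟨E, inferInstance, inferInstance, Module.injective_module_of_injective_object R E,
    (Injective.ι (ModuleCat.of R M)).hom, (ModuleCat.mono_iff_injective _).1 inferInstance⟩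

theorem exists_pow_mul_mem_of_pow_succ_mul_mem [IsNoetherianRing R] (I : Ideal R) (x : R) :
    ∃ m, ∀ a, x ^ (m + 1) * a ∈ I → x ^ m * a ∈ I := by
  have hmono : Monotone fun m => Submodule.comap (LinearMap.lsmul R R (x ^ m)) I := by
    refine monotone_nat_of_le_succ fun m a (ha : x ^ m * a ∈ I) => ?_
    change x ^ (m + 1) * a ∈ I
    rw [pow_succ', mul_assoc]
    exact I.mul_mem_left _ ha
  obtain ⟨m, hm⟩ := monotone_stabilizes_iff_noetherian.2 ‹IsNoetherianRing R› ⟨_, hmono⟩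
  exact ⟨m, fun a ha => (hm (m + 1) m.le_succ).ge ha⟩

theorem primaryComponent_le_smul_sup_of_injective {R : Type u} [CommRing R] [IsNoetherianRing R]
    (J : Ideal R) (x : R) (E : Type u) [AddCommGroup E] [Module R E] [Module.Injective R E] :
    J.primaryComponent E ≤ x • J.primaryComponent E ⊔ (Ideal.span {x}).primaryComponent E := by
  intro e he
  obtain ⟨s, hs⟩ := mem_primaryComponent.1 he
  obtain ⟨m, hm⟩ := exists_pow_mul_mem_of_pow_succ_mul_mem (J ^ s) x
  -- The map `x ^ (m + 1) ↦ x ^ m • e` is well defined on a submodule of `R ⧸ J ^ s`.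
  let φ : R →ₗ[R] R ⧸ J ^ s := LinearMap.toSpanSingleton R _ (Submodule.Quotient.mk (x ^ (m + 1)))
  let ψ : R →ₗ[R] E := LinearMap.toSpanSingleton R E (x ^ m • e)
  have hker : LinearMap.ker φ ≤ LinearMap.ker ψ := by
    intro a (ha : Submodule.Quotient.mk (a * x ^ (m + 1)) = 0)
    change a • x ^ m • e = 0
    rw [Submodule.Quotient.mk_eq_zero, mul_comm] at ha
    rw [smul_smul, mul_comm, hs _ (hm a ha)]
  obtain ⟨g, hg⟩ := exists_comp_eq_of_ker_le hker
  let v := g (Submodule.Quotient.mk 1)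
  have hv : v ∈ J.primaryComponent E := mem_primaryComponent.2 ⟨s, fun a ha => by
    rw [← map_smul, ← Submodule.Quotient.mk_smul, smul_eq_mul, mul_one,
      (Submodule.Quotient.mk_eq_zero _).2 ha, map_zero]⟩
  have hxv : x ^ m • (e - x • v) = 0 := by
    have h : g (φ 1) = ψ 1 := LinearMap.congr_fun hg 1
    rw [smul_sub, sub_eq_zero, smul_smul, ← pow_succ, ← map_smul, ← Submodule.Quotient.mk_smul]
    simpa [φ, ψ] using h.symm
  exact Submodule.mem_sup.2 ⟨x • v, Submodule.smul_mem_pointwise_smul _ _ _ hv, e - x • v,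
    mem_primaryComponent_span_singleton.2 ⟨m, hxv⟩, add_sub_cancel _ _⟩

end PrimaryComponent

namespace LocalCoh

open scoped Pointwise

variable {R : Type u} [CommRing R] {M : Type u} [AddCommGroup M] [Module R M]

section InjectiveEmbedding

variable {E : Type u} [AddCommGroup E] [Module R E] [Module.Injective R E] {f : M →ₗ[R] E}
  (hf : Function.Injective f) (J : Ideal R)

include hf

theorem subsingleton_quotient_range_iff (i : ℕ) :
    Subsingleton (LocalCoh J (i + 1) (E ⧸ LinearMap.range f)) ↔
      Subsingleton (LocalCoh J (i + 2) M) := by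
  have hfg := f.exact_map_mkQ_range
  have hg := (LinearMap.range f).mkQ_surjective
  have := subsingleton_of_injective J i E
  have := subsingleton_of_injective J (i + 1) E
  have hδ : Function.Bijective (δ hf hfg hg J (i + 1)) :=
    ⟨(injective_iff_map_eq_zero _).2 fun z hz => by
      obtain ⟨w, rfl⟩ := (exact_map_δ hf hfg hg J (i + 1) z).1 hz
      rw [Subsingleton.elim w 0, map_zero],
    fun z => (exact_δ_map hf hfg hg J (i + 1) z).1 (Subsingleton.elim _ _)⟩
  exact (Equiv.ofBijective _ hδ).subsingleton_congr

theorem subsingleton_one_iff : Subsingleton (LocalCoh J 1 M) ↔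
    J.primaryComponent (E ⧸ LinearMap.range f) ≤
      (J.primaryComponent E).map (LinearMap.range f).mkQ := by
  have hfg := f.exact_map_mkQ_range
  have hg := (LinearMap.range f).mkQ_surjective
  have hE := subsingleton_of_injective J 0 E
  have hδ : Function.Surjective (δ hf hfg hg J 0) := fun z =>
    (exact_δ_map hf hfg hg J 0 z).1 (Subsingleton.elim (α := LocalCoh J 1 E) _ _)
  rw [← range_ι, ← range_ι, ← LinearMap.range_comp, ← ι_comp_map, LinearMap.range_comp]
  constructor
  · intro h
    have hsurj : Function.Surjective (map J 0 (LinearMap.range f).mkQ) := fun w =>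
      (exact_map_δ hf hfg hg J 0 w).1 (Subsingleton.elim (α := LocalCoh J 1 M) _ _)
    rw [LinearMap.range_eq_top.2 hsurj, Submodule.map_top]
  · intro h
    refine subsingleton_of_forall_eq 0 fun z => ?_
    obtain ⟨w, rfl⟩ := hδ z
    obtain ⟨v, hv, hvw⟩ := h ⟨w, rfl⟩
    obtain rfl := ι_injective _ _ hvw
    obtain ⟨e, rfl⟩ := hv
    exact (exact_map_δ hf hfg hg J 0).apply_apply_eq_zero e

end InjectiveEmbedding

/-- The hypothesis `hM` says that `Γ_J(M) → Γ_J(M)_x` is surjective. -/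
theorem subsingleton_one_sup_span_singleton {J : Ideal R} {x : R}
    (hM : J.primaryComponent M ≤ x • J.primaryComponent M ⊔ (Ideal.span {x}).primaryComponent M)
    (h : Subsingleton (LocalCoh J 1 M)) : Subsingleton (LocalCoh (J ⊔ Ideal.span {x}) 1 M) := by
  obtain ⟨E, _, _, _, f, hf⟩ := exists_injective_linearMap_to_injective R M
  rw [subsingleton_one_iff hf] at h ⊢
  intro w hw
  rw [primaryComponent_sup] at hw
  obtain ⟨e, he, rfl⟩ := h hw.1
  obtain ⟨n, hn⟩ := mem_primaryComponent_span_singleton.1 hw.2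
  rw [← map_smul, Submodule.mkQ_apply, Submodule.Quotient.mk_eq_zero] at hn
  obtain ⟨u, hu⟩ := hn
  have huJ : u ∈ J.primaryComponent M := by
    rw [← comap_primaryComponent_of_injective J hf, Submodule.mem_comap, hu]
    exact Submodule.smul_mem _ _ he
  obtain ⟨_, ⟨v, hv, rfl⟩, t, ht, rfl⟩ := Submodule.mem_sup.1 (le_pow_smul_sup hM n huJ)
  obtain ⟨m, hm⟩ := mem_primaryComponent_span_singleton.1 ht
  have hev : x ^ n • (e - f v) = f t := by
    rw [smul_sub, ← hu, ← map_smul, ← map_sub]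
    exact congrArg f (add_sub_cancel_left _ _)
  refine ⟨e - f v, ?_, ?_⟩
  · rw [SetLike.mem_coe, primaryComponent_sup]
    refine ⟨sub_mem he (map_primaryComponent_le J f ⟨v, hv, rfl⟩),
      mem_primaryComponent_span_singleton.2 ⟨m + n, ?_⟩⟩
    rw [pow_add, mul_smul, hev, ← map_smul, hm, map_zero]
  · rw [map_sub, sub_eq_self, Submodule.mkQ_apply, Submodule.Quotient.mk_eq_zero]
    exact ⟨v, rfl⟩

variable [IsNoetherianRing R]

theorem subsingleton_sup_span_singleton {J : Ideal R} {x : R} {i : ℕ} {M : Type u}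
    [AddCommGroup M] [Module R M] (h : Subsingleton (LocalCoh J i M))
    (h' : Subsingleton (LocalCoh J (i + 1) M)) :
    Subsingleton (LocalCoh (J ⊔ Ideal.span {x}) (i + 1) M) := by
  induction i generalizing M with
  | zero =>
    refine subsingleton_one_sup_span_singleton ?_ h'
    rw [subsingleton_zero_iff.1 h]
    exact bot_le
  | succ i ih =>
    obtain ⟨E, _, _, _, f, hf⟩ := exists_injective_linearMap_to_injective R M
    rw [← subsingleton_quotient_range_iff hf] at h' ⊢
    cases i with
    | zero =>
      refine subsingleton_one_sup_span_singleton ?_ h'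
      calc J.primaryComponent (E ⧸ LinearMap.range f)
          ≤ (J.primaryComponent E).map (LinearMap.range f).mkQ := (subsingleton_one_iff hf J).1 h
        _ ≤ (x • J.primaryComponent E ⊔ (Ideal.span {x}).primaryComponent E).map _ :=
          Submodule.map_mono (primaryComponent_le_smul_sup_of_injective J x E)
        _ ≤ _ := by
          rw [Submodule.map_sup, Submodule.map_pointwise_smul]
          exact sup_le_sup (smul_mono_right x (map_primaryComponent_le J _))
            (map_primaryComponent_le _ _)
    | succ i => exact ih ((subsingleton_quotient_range_iff hf J i).2 h) h'

theorem subsingleton_of_primaryComponent_eq_top {J : Ideal R} (hM : J.primaryComponent M = ⊤)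
    (i : ℕ) : Subsingleton (LocalCoh J (i + 1) M) := by
  classical
  obtain ⟨S, hS⟩ := IsNoetherian.noetherian J
  obtain rfl : Ideal.span S = J := hS
  induction S using Finset.induction_on generalizing i with
  | empty =>
    rw [Finset.coe_empty, Ideal.span_empty]
    exact subsingleton_bot i M
  | insert x S _ ih =>
    rw [Finset.coe_insert, Ideal.span_insert, sup_comm] at hM ⊢
    rw [primaryComponent_sup, inf_eq_top_iff] at hM
    cases i with
    | zero =>
      refine subsingleton_one_sup_span_singleton ?_ (ih 0 hM.1)
      rw [hM.2, sup_top_eq]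
      exact le_top
    | succ i => exact subsingleton_sup_span_singleton (ih i hM.1) (ih (i + 1) hM.1)

end LocalCoh

theorem span_range_eq_sup_span_singleton_last {R : Type*} [Semiring R] {n : ℕ}
    (x : Fin (n + 1) → R) :
    Ideal.span (Set.range x) =
      Ideal.span (Set.range (Fin.init x)) ⊔ Ideal.span {x (Fin.last n)} := by
  rw [← Ideal.span_union, Set.union_singleton, ← Fin.range_snoc, Fin.snoc_init_self]

namespace LocalCoh

variable {R : Type u} [CommRing R] [IsNoetherianRing R] (M : Type u) [AddCommGroup M] [Module R M]

theorem subsingleton_span_range_of_lt {n i : ℕ} (x : Fin n → R) (hi : n < i) :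
    Subsingleton (LocalCoh (Ideal.span (Set.range x)) i M) := by
  obtain ⟨i, rfl⟩ := Nat.exists_eq_succ_of_ne_zero hi.ne_bot
  induction n generalizing i with
  | zero =>
    rw [Set.range_eq_empty, Ideal.span_empty]
    exact subsingleton_bot i M
  | succ n ih =>
    obtain ⟨i, rfl⟩ := Nat.exists_eq_succ_of_ne_zero (Nat.lt_of_succ_lt_succ hi).ne_bot
    rw [span_range_eq_sup_span_singleton_last]
    exact subsingleton_sup_span_singleton (ih _ i (by omega)) (ih _ (i + 1) (by omega))

theorem subsingleton_span_range_of_castLE {r d : ℕ} (hr : r ≤ d) (x : Fin d → R)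
    (h : Subsingleton
      (LocalCoh (Ideal.span (Set.range fun i : Fin r => x (Fin.castLE hr i))) r M)) :
    Subsingleton (LocalCoh (Ideal.span (Set.range x)) d M) := by
  induction d, hr using Nat.le_induction with
  | base => exact h
  | succ d hr ih =>
    rw [span_range_eq_sup_span_singleton_last]
    exact subsingleton_sup_span_singleton (ih (Fin.init x) h)
      (subsingleton_span_range_of_lt M _ d.lt_succ_self)

end LocalCoh

/-! ### Artinian modules -/

theorem exists_forall_ge_apply_eq {α : Type*} [PartialOrder α] [WellFoundedLT α] (V : ℕ → ℕ → α)
    (hV : ∀ ⦃a b c e⦄, a ≤ b → c ≤ e → V b e ≤ V a c) : ∃ n, ∀ j ≥ n, ∀ i, V n i = V j i := by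
  obtain ⟨m, hm⟩ := WellFoundedGT.monotone_chain_condition
    (⟨fun j => OrderDual.toDual (V j j), fun _ _ h => hV h h⟩ : ℕ →o αᵒᵈ)
  have hdiag : ∀ j ≥ m, V m m = V j j := hm
  have hrow : ∀ i, ∃ n, ∀ j ≥ n, V n i = V j i := fun i =>
    WellFoundedGT.monotone_chain_condition
      (⟨fun j => OrderDual.toDual (V j i), fun _ _ h => hV h le_rfl⟩ : ℕ →o αᵒᵈ)
  choose n hn using hrow
  refine ⟨m ⊔ (Finset.range m).sup n, fun j hj i => (hV hj le_rfl).antisymm' ?_⟩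
  rcases lt_or_ge i m with hi | hi
  · have hle : n i ≤ m ⊔ (Finset.range m).sup n :=
      (Finset.le_sup (Finset.mem_range.2 hi)).trans le_sup_right
    rw [← hn i _ hle, ← hn i j (hle.trans hj)]
  · calc V (m ⊔ (Finset.range m).sup n) i ≤ V m m := hV le_sup_left hi
      _ = V (j ⊔ i) (j ⊔ i) := hdiag _ (hi.trans le_sup_right)
      _ ≤ V j i := hV le_sup_left le_sup_right

section Artinian

open scoped Pointwise

variable {R : Type*} [CommRing R] {N : Type*} [AddCommGroup N] [Module R N]

theorem pow_smul_le_pow_smul (y : R) (L : Submodule R N) {c e : ℕ} (h : c ≤ e) :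
    y ^ e • L ≤ y ^ c • L := by
  rw [← Nat.add_sub_cancel' h, pow_add, mul_smul]
  exact smul_mono_right _ (Submodule.smul_le_self_of_tower _ L)

theorem le_of_comap_pow_smul_le {y : R} (hy : ∀ u : N, ∃ n : ℕ, y ^ n • u = 0)
    {L L' : Submodule R N} (hle : L' ≤ L)
    (h : ∀ i : ℕ, (y ^ i • L).comap (Submodule.torsionBy R N y).subtype ≤
      (y ^ i • L').comap (Submodule.torsionBy R N y).subtype) : L ≤ L' := by
  have key (k : ℕ) : ∀ u ∈ L, y ^ k • u = 0 → u ∈ L' := by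
    induction k with
    | zero =>
      intro u _ hu
      rw [pow_zero, one_smul] at hu
      exact hu ▸ zero_mem _
    | succ k ih =>
      intro u hu hyu
      have hmem : y ^ k • u ∈ Submodule.torsionBy R N y := by
        rw [Submodule.mem_torsionBy_iff, smul_smul, ← pow_succ', hyu]
      obtain ⟨w, hw, hwu⟩ := h k (x := ⟨y ^ k • u, hmem⟩)
        (Submodule.smul_mem_pointwise_smul u _ L hu)
      have hsub : u - w ∈ L' := ih (u - w) (sub_mem hu (hle hw)) (by
        rw [smul_sub, sub_eq_zero]; exact hwu.symm)
      exact (L'.sub_mem_iff_left hw).1 hsub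
  intro u hu
  obtain ⟨k, hk⟩ := hy u
  exact key k u hu hk

/-- A submodule `L` is controlled by the traces of the `yⁱ • L` on the kernel of `y`. -/
theorem isArtinian_of_isArtinian_torsionBy (y : R) (hy : ∀ u : N, ∃ n : ℕ, y ^ n • u = 0)
    [IsArtinian R (Submodule.torsionBy R N y)] : IsArtinian R N := by
  rw [← monotone_stabilizes_iff_artinian]
  intro f
  let L (j : ℕ) : Submodule R N := OrderDual.ofDual (f j)
  have hL : Antitone L := fun _ _ h => f.monotone h
  obtain ⟨n, hn⟩ := exists_forall_ge_apply_eq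
    (fun j i => (y ^ i • L j).comap (Submodule.torsionBy R N y).subtype)
    fun a b c e hab hce => Submodule.comap_mono
      ((smul_mono_right _ (hL hab)).trans (pow_smul_le_pow_smul y (L a) hce))
  exact ⟨n, fun j hj => (hL hj).antisymm'
    (le_of_comap_pow_smul_le hy (hL hj) fun i => (hn j hj i).le)⟩

theorem supIrred_top_of_supIrred {X : Submodule R N} (hX : SupIrred X) :
    SupIrred (⊤ : Submodule R X) := by
  have map_eq_iff (A : Submodule R X) : A.map X.subtype = X ↔ A = ⊤ := by
    rw [← (Submodule.map_injective_of_injective X.subtype_injective).eq_iff, Submodule.map_top,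
      X.range_subtype]
  constructor
  · intro h
    refine hX.ne_bot ?_
    rw [← (map_eq_iff ⊥).2 h.eq_bot.symm, Submodule.map_bot]
  · intro A B hAB
    rw [← map_eq_iff, Submodule.map_sup] at hAB
    simpa only [map_eq_iff] using hX.2 hAB

section SupIrred

variable [IsArtinian R N] (hN : SupIrred (⊤ : Submodule R N))
include hN

theorem surjective_or_isNilpotent_of_supIrred (f : Module.End R N) :
    Function.Surjective f ∨ IsNilpotent f := by
  obtain ⟨n, hn, hn0⟩ :=
    (f.eventually_codisjoint_ker_pow_range_pow.and (Filter.eventually_ne_atTop 0)).exists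
  rcases hN.2 hn.eq_top with h | h
  · exact .inr ⟨n, LinearMap.ker_eq_top.1 h⟩
  · obtain ⟨n, rfl⟩ := Nat.exists_eq_succ_of_ne_zero hn0
    rw [LinearMap.range_eq_top, pow_succ'] at h
    exact .inl (Function.Surjective.of_comp h)

theorem surjective_algebraMap_end_iff (y : R) :
    Function.Surjective (algebraMap R (Module.End R N) y) ↔
      y ∉ (Module.annihilator R N).radical := by
  have hnil : IsNilpotent (algebraMap R (Module.End R N) y) ↔
      y ∈ (Module.annihilator R N).radical := by
    simp only [IsNilpotent, Ideal.mem_radical_iff, ← map_pow, LinearMap.ext_iff,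
      Module.mem_annihilator, Module.algebraMap_end_apply, LinearMap.zero_apply]
  refine ⟨fun hsurj hy => ?_,
    fun hy => (surjective_or_isNilpotent_of_supIrred hN _).resolve_right (mt hnil.1 hy)⟩
  obtain ⟨n, hn⟩ := hnil.2 hy
  have hn_surj := hsurj.iterate n
  rw [← Module.End.coe_pow, hn, ← LinearMap.range_eq_top, LinearMap.range_zero] at hn_surj
  exact hN.ne_bot hn_surj.symm

theorem isPrime_radical_annihilator_of_supIrred : (Module.annihilator R N).radical.IsPrime := by
  rw [Ideal.isPrime_iff, Ideal.ne_top_iff_one]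
  refine ⟨(surjective_algebraMap_end_iff hN 1).1 ?_, fun {a b} hab => ?_⟩
  · rw [map_one]
    exact Function.surjective_id
  · contrapose! hab
    simp only [← surjective_algebraMap_end_iff hN] at hab ⊢
    rw [map_mul]
    exact hab.1.comp hab.2

end SupIrred

end Artinian

section Local

open scoped Pointwise

variable {R : Type*} [CommRing R] [IsLocalRing R] {N : Type*} [AddCommGroup N] [Module R N]

theorem maximalIdeal_le_radical_annihilator [Module.Finite R N] [IsArtinian R N] :
    maximalIdeal R ≤ (Module.annihilator R N).radical := by
  intro a ha
  obtain ⟨n, hn⟩ := IsArtinian.monotone_stabilizes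
    ⟨fun n => OrderDual.toDual (a ^ n • (⊤ : Submodule R N)),
      fun _ _ h => pow_smul_le_pow_smul a ⊤ h⟩
  have hstable : a ^ n • (⊤ : Submodule R N) = a • a ^ n • ⊤ := by
    rw [smul_smul, ← pow_succ']
    exact hn (n + 1) n.le_succ
  have hbot : a ^ n • (⊤ : Submodule R N) = ⊥ :=
    Submodule.eq_bot_of_eq_pointwise_smul_of_mem_jacobson_annihilator
      (Module.Finite.fg_top.map _) hstable (maximalIdeal_le_jacobson _ ha)
  refine ⟨n, Module.mem_annihilator.2 fun u => ?_⟩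
  rw [← Submodule.mem_bot R, ← hbot]
  exact Submodule.smul_mem_pointwise_smul u _ ⊤ trivial

variable [IsNoetherianRing R]

theorem isArtinianRing_quotient_of_maximalIdeal_le_radical {I : Ideal R}
    (hI : maximalIdeal R ≤ I.radical) : IsArtinianRing (R ⧸ I) := by
  rw [isArtinianRing_iff_krullDimLE_zero,
    Ideal.krullDimLE_zero_quotient_iff_forall_minimalPrimes_isMaximal]
  intro J hJ
  have := hJ.1.1
  rw [← (maximalIdeal.isMaximal R).eq_of_le this.ne_top (hI.trans (this.radical_le_iff.2 hJ.1.2))]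
  infer_instance

theorem finite_iff_isArtinian (h : maximalIdeal R ≤ (Module.annihilator R N).radical) :
    Module.Finite R N ↔ IsArtinian R N := by
  let _ : Module (R ⧸ Module.annihilator R N) N := Module.quotientAnnihilator
  have : IsScalarTower R (R ⧸ Module.annihilator R N) N :=
    (Module.isTorsionBySet_annihilator R N).isScalarTower
  have := isArtinianRing_quotient_of_maximalIdeal_le_radical h
  have htfae := (IsArtinianRing.tfae (R ⧸ Module.annihilator R N) N).out 0 2
  refine ⟨fun _ => ?_, fun h => ?_⟩
  · have := htfae.1 (Module.Finite.of_restrictScalars_finite R _ _)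
    exact isArtinian_of_surjective_algebraMap (R := R ⧸ Module.annihilator R N)
      Ideal.Quotient.mk_surjective
  · have := htfae.2 (isArtinian_of_tower R h)
    exact Module.Finite.trans (R ⧸ Module.annihilator R N) N

/-- The primes in `F` are the nonmaximal attached primes of `N`. -/
theorem exists_finset_isPrime_forall_exists_fg [IsArtinian R N] :
    ∃ F : Finset (Ideal R), (∀ p ∈ F, p.IsPrime ∧ p ≠ maximalIdeal R) ∧
      ∀ y : R, (∀ p ∈ F, y ∉ p) → ∃ G : Submodule R N, G.FG ∧ G ⊔ y • ⊤ = ⊤ := by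
  classical
  obtain ⟨s, hs, hirr⟩ := exists_supIrred_decomposition (⊤ : Submodule R N)
  refine ⟨{X ∈ s | ¬ X.FG}.image fun X => X.annihilator.radical, ?_, fun y hy => ?_⟩
  · simp only [Finset.forall_mem_image, Finset.mem_filter]
    rintro X ⟨hX, hfg⟩
    refine ⟨isPrime_radical_annihilator_of_supIrred (supIrred_top_of_supIrred (hirr hX)),
      fun h => hfg (Module.Finite.iff_fg.1 ((finite_iff_isArtinian h.ge).2 inferInstance))⟩
  · refine ⟨{X ∈ s | X.FG}.sup id,
      Submodule.fg_finset_sup _ _ fun X hX => (Finset.mem_filter.1 hX).2, ?_⟩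
    refine eq_top_iff.2 (hs.ge.trans (Finset.sup_le fun X hX => ?_))
    by_cases hfg : X.FG
    · exact (Finset.le_sup (f := id) (Finset.mem_filter.2 ⟨hX, hfg⟩)).trans le_sup_left
    · have hyX := hy _ (Finset.mem_image_of_mem _ (Finset.mem_filter.2 ⟨hX, hfg⟩))
      refine le_trans ?_ le_sup_right
      intro u hu
      obtain ⟨w, hw⟩ := (surjective_algebraMap_end_iff (supIrred_top_of_supIrred (hirr hX)) y).2
        hyX ⟨u, hu⟩
      exact ⟨w, trivial, congrArg Subtype.val hw⟩

end Local

/-! ### Nonvanishing in top degree -/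

section Radical

variable {R : Type*} [CommRing R] [IsNoetherianRing R] {M : Type*} [AddCommGroup M] [Module R M]

theorem mem_primaryComponent_iff_le_radical {J : Ideal R} {u : M} :
    u ∈ J.primaryComponent M ↔ J ≤ (Ideal.torsionOf R M u).radical := by
  rw [mem_primaryComponent]
  exact ⟨fun ⟨n, hn⟩ a ha => ⟨n, hn _ (Ideal.pow_mem_pow ha n)⟩,
    fun h => Ideal.exists_pow_le_of_le_radical_of_fg h (IsNoetherian.noetherian _)⟩

theorem primaryComponent_quotient_primaryComponent (J : Ideal R) (M : Type*) [AddCommGroup M]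
    [Module R M] :
    J.primaryComponent (M ⧸ J.primaryComponent M) = ⊥ := by
  refine (Submodule.eq_bot_iff _).2 fun v hv => ?_
  obtain ⟨u, rfl⟩ := Submodule.mkQ_surjective _ v
  obtain ⟨n, hn⟩ := mem_primaryComponent.1 hv
  rw [Submodule.mkQ_apply, Submodule.Quotient.mk_eq_zero, mem_primaryComponent_iff_le_radical]
  intro a ha
  have hau := hn _ (Ideal.pow_mem_pow ha n)
  rw [← map_smul, Submodule.mkQ_apply, Submodule.Quotient.mk_eq_zero] at hau
  obtain ⟨m, hm⟩ := mem_primaryComponent.1 hau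
  refine ⟨m + n, ?_⟩
  rw [Ideal.mem_torsionOf_iff, pow_add, mul_smul]
  exact hm _ (Ideal.pow_mem_pow ha m)

theorem le_radical_annihilator_of_primaryComponent_eq_top [Module.Finite R M] {J : Ideal R}
    (h : J.primaryComponent M = ⊤) : J ≤ (Module.annihilator R M).radical := by
  rw [← PrimeSpectrum.zeroLocus_subset_zeroLocus_iff, ← Module.support_eq_zeroLocus]
  intro p hp
  obtain ⟨u, hu⟩ := Module.mem_support_iff_exists_annihilator.1 hp
  rw [Ideal.annihilator_span_singleton_eq_torsionOf] at hu
  exact (mem_primaryComponent_iff_le_radical.1 (h ▸ Submodule.mem_top)).trans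
    (p.isPrime.radical_le_iff.2 hu)

end Radical

open scoped Pointwise in
theorem exact_smul_id_mkQ {R : Type*} [CommRing R] (y : R) (M : Type*) [AddCommGroup M]
    [Module R M] :
    Function.Exact (y • LinearMap.id : M →ₗ[R] M) (y • (⊤ : Submodule R M)).mkQ := fun u => by
  rw [Submodule.mkQ_apply, Submodule.Quotient.mk_eq_zero,
    Submodule.mem_smul_pointwise_iff_exists]
  simp

namespace LocalCoh

open scoped Pointwise

variable {R : Type u} [CommRing R] {M : Type u} [AddCommGroup M] [Module R M]

theorem bijective_map_mkQ_primaryComponent [IsNoetherianRing R] (J : Ideal R) (i : ℕ) (M : Type u)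
    [AddCommGroup M] [Module R M] :
    Function.Bijective (map J (i + 1) (J.primaryComponent M).mkQ) := by
  have hf := (J.primaryComponent M).subtype_injective
  have hfg := LinearMap.exact_subtype_mkQ (J.primaryComponent M)
  have hg := (J.primaryComponent M).mkQ_surjective
  have := subsingleton_of_primaryComponent_eq_top (primaryComponent_primaryComponent J M)
  refine ⟨(injective_iff_map_eq_zero _).2 fun z hz => ?_, fun z =>
    (exact_map_δ hf hfg hg J (i + 1) z).1 (Subsingleton.elim _ _)⟩
  obtain ⟨w, rfl⟩ := (exact_map_map hf hfg hg J (i + 1) z).1 hz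
  rw [Subsingleton.elim w 0, _root_.map_zero]

section Regular

variable {y : R} (hy : IsSMulRegular M y) (J : Ideal R) (i : ℕ)

include hy

theorem ker_map_mkQ_smul_top :
    LinearMap.ker (map J i (y • (⊤ : Submodule R M)).mkQ) = y • ⊤ := by
  have hf : Function.Injective (y • LinearMap.id : M →ₗ[R] M) := hy
  ext z
  rw [LinearMap.mem_ker, exact_map_map hf (exact_smul_id_mkQ y M) (Submodule.mkQ_surjective _) J i,
    map_smul_id, Submodule.mem_smul_pointwise_iff_exists]
  simp

theorem map_mkQ_smul_top_surjective (h : Subsingleton (LocalCoh J (i + 1) M)) :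
    Function.Surjective (map J i (y • (⊤ : Submodule R M)).mkQ) := by
  have hf : Function.Injective (y • LinearMap.id : M →ₗ[R] M) := hy
  exact fun z => (exact_map_δ hf (exact_smul_id_mkQ y M) (Submodule.mkQ_surjective _) J i z).1
    (Subsingleton.elim _ _)

theorem exists_range_eq_torsionBy :
    ∃ φ : LocalCoh J i (QuotSMulTop y M) →ₗ[R] LocalCoh J (i + 1) M,
      LinearMap.range φ = Submodule.torsionBy R (LocalCoh J (i + 1) M) y := by
  have hf : Function.Injective (y • LinearMap.id : M →ₗ[R] M) := hy
  have hfg := exact_smul_id_mkQ y M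
  refine ⟨δ hf hfg (Submodule.mkQ_surjective _) J i, ?_⟩
  ext z
  rw [Submodule.mem_torsionBy_iff, LinearMap.mem_range, ← Set.mem_range,
    ← exact_δ_map hf hfg (Submodule.mkQ_surjective _) J i, map_smul_id]
  rfl

end Regular

end LocalCoh

section IdealOfDefinition

variable {R : Type*} [CommRing R] [IsLocalRing R]

/-- `I` is an ideal of definition of the `R`-module `M`: it is contained in the maximal ideal and
`I + Ann M` has the maximal ideal in its radical. For finitely generated `M` over a Noetherian ring
the second condition says that `M ⧸ I M` has finite length; the form chosen here visibly passes
to quotients of `M`. -/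
structure IsIdealOfDefinition (I : Ideal R) (M : Type*) [AddCommGroup M] [Module R M] : Prop where
  le_maximalIdeal : I ≤ maximalIdeal R
  maximalIdeal_le : maximalIdeal R ≤ (I ⊔ Module.annihilator R M).radical

namespace IsIdealOfDefinition

variable {I : Ideal R} {M : Type*} [AddCommGroup M] [Module R M]

theorem of_isFiniteLength [Module.Finite R M] (hI : I ≤ maximalIdeal R)
    (h : IsFiniteLength R (M ⧸ (I • (⊤ : Submodule R M)))) : IsIdealOfDefinition I M where
  le_maximalIdeal := hI
  maximalIdeal_le := by
    have := (isFiniteLength_iff_isNoetherian_isArtinian.1 h).2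
    refine (maximalIdeal_le_radical_annihilator (N := M ⧸ (I • (⊤ : Submodule R M)))).trans_eq ?_
    rw [← PrimeSpectrum.zeroLocus_eq_iff, PrimeSpectrum.zeroLocus_sup,
      ← Module.support_eq_zeroLocus, ← Module.support_eq_zeroLocus, Module.support_quotient,
      Set.inter_comm]

theorem quotient (h : IsIdealOfDefinition I M) (P : Submodule R M) :
    IsIdealOfDefinition I (M ⧸ P) where
  le_maximalIdeal := h.le_maximalIdeal
  maximalIdeal_le := h.maximalIdeal_le.trans (Ideal.radical_mono
    (sup_le_sup_left (P.mkQ.annihilator_le_of_surjective P.mkQ_surjective) I))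

theorem maximalIdeal_le_radical (h : IsIdealOfDefinition I M) {T : Ideal R} (hI : I ≤ T.radical)
    (hM : Module.annihilator R M ≤ T.radical) : maximalIdeal R ≤ T.radical :=
  h.maximalIdeal_le.trans (Ideal.radical_le_radical_iff.2 (sup_le hI hM))

theorem maximalIdeal_le_radical_annihilator_primaryComponent [IsNoetherianRing R]
    [Module.Finite R M] (h : IsIdealOfDefinition I M) :
    maximalIdeal R ≤ (Module.annihilator R (I.primaryComponent M)).radical :=
  h.maximalIdeal_le_radical (le_radical_annihilator_of_primaryComponent_eq_top
      (primaryComponent_primaryComponent I M))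
    (((I.primaryComponent M).subtype.annihilator_le_of_injective
      (Submodule.subtype_injective _)).trans Ideal.le_radical)

theorem exists_pow_smul_eq_zero {R : Type u} [CommRing R] [IsLocalRing R] {I : Ideal R}
    {M : Type u} [AddCommGroup M] [Module R M] (h : IsIdealOfDefinition I M) {y : R}
    (hy : y ∈ maximalIdeal R) {i : ℕ} (z : LocalCoh I i M) : ∃ n : ℕ, y ^ n • z = 0 := by
  obtain ⟨n, hn⟩ := mem_primaryComponent.1 (LocalCoh.primaryComponent_eq_top I i M ▸
    Submodule.mem_top : z ∈ I.primaryComponent (LocalCoh I i M))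
  refine h.maximalIdeal_le_radical (T := Ideal.torsionOf R _ z)
    (fun a ha => ⟨n, hn _ (Ideal.pow_mem_pow ha n)⟩) (fun a ha => Ideal.le_radical ?_) hy
  exact Module.mem_annihilator.1 (LocalCoh.annihilator_le I i M ha) z

end IsIdealOfDefinition

end IdealOfDefinition

section PrimeAvoidance

variable {R : Type*} [CommRing R] [IsLocalRing R]

theorem exists_mem_maximalIdeal_forall_notMem {S : Set (Ideal R)} (hS : S.Finite)
    (h : ∀ p ∈ S, p.IsPrime ∧ p ≠ maximalIdeal R) : ∃ y ∈ maximalIdeal R, ∀ p ∈ S, y ∉ p := by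
  have hnot : ¬ (maximalIdeal R : Set R) ⊆ ⋃ p ∈ S, (p : Set R) := by
    intro hsub
    obtain ⟨p, hp, hle⟩ := (Ideal.subset_union_prime_finite hS (f := fun p : Ideal R => p) ⊥ ⊥
      fun p hp _ _ => (h p hp).1).1 hsub
    exact (h p hp).2 ((maximalIdeal.isMaximal R).eq_of_le (h p hp).1.ne_top hle).symm
  obtain ⟨y, hy, hyS⟩ := Set.not_subset.1 hnot
  simp only [Set.mem_iUnion, not_exists] at hyS
  exact ⟨y, hy, hyS⟩

variable [IsNoetherianRing R] {I : Ideal R} {M : Type*} [AddCommGroup M] [Module R M]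

theorem ne_maximalIdeal_of_mem_associatedPrimes (hI : I ≤ maximalIdeal R)
    (hM : I.primaryComponent M = ⊥) {p : Ideal R} (hp : p ∈ associatedPrimes R M) :
    p ≠ maximalIdeal R := by
  rintro rfl
  obtain ⟨hprime, u, hu⟩ := isAssociatedPrime_iff.1 hp
  have hsmul (a : R) : a ∈ maximalIdeal R ↔ a • u = 0 := by
    rw [hu, Submodule.mem_colon_singleton, Submodule.mem_bot]
  have hu0 : u ∈ I.primaryComponent M :=
    mem_primaryComponent.2 ⟨1, fun a ha => (hsmul a).1 (hI (pow_one I ▸ ha))⟩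
  rw [hM, Submodule.mem_bot] at hu0
  exact hprime.one_notMem ((hsmul 1).2 (by rw [hu0, smul_zero]))

theorem exists_isSMulRegular_forall_notMem [Module.Finite R M] (hI : I ≤ maximalIdeal R)
    (hM : I.primaryComponent M = ⊥) (F : Finset (Ideal R))
    (hF : ∀ p ∈ F, p.IsPrime ∧ p ≠ maximalIdeal R) :
    ∃ y ∈ maximalIdeal R, IsSMulRegular M y ∧ ∀ p ∈ F, y ∉ p := by
  obtain ⟨y, hy, hyS⟩ := exists_mem_maximalIdeal_forall_notMem
    (F.finite_toSet.union (associatedPrimes.finite R M)) (by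
      rintro p (hp | hp)
      exacts [hF p hp, ⟨hp.isPrime, ne_maximalIdeal_of_mem_associatedPrimes hI hM hp⟩])
  refine ⟨y, hy, not_not.1 fun hreg => ?_, fun p hp => hyS p (Or.inl hp)⟩
  have hmem : y ∈ ⋃ p ∈ associatedPrimes R M, (p : Set R) :=
    biUnion_associatedPrimes_eq_compl_regular R M ▸ hreg
  obtain ⟨p, hp, hyp⟩ := Set.mem_iUnion₂.1 hmem
  exact hyS p (Or.inr hp) hyp

end PrimeAvoidance

section Dimension

variable {R : Type*} [CommRing R] [IsLocalRing R] {M : Type*} [AddCommGroup M] [Module R M]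

theorem support_subset_closedPoint [Module.Finite R M]
    (h : maximalIdeal R ≤ (Module.annihilator R M).radical) :
    Module.support R M ⊆ {closedPoint R} := by
  rw [Module.support_eq_zeroLocus, ← PrimeSpectrum.zeroLocus_radical]
  exact fun p hp => PrimeSpectrum.ext
    ((maximalIdeal.isMaximal R).eq_of_le p.isPrime.ne_top (h.trans hp)).symm

theorem supportDim_quotient_eq {P : Submodule R M} (hP : Module.support R P ⊆ {closedPoint R})
    (hM : 0 < Module.supportDim R M) : Module.supportDim R (M ⧸ P) = Module.supportDim R M := by
  have hunion := Module.support_of_exact (LinearMap.exact_subtype_mkQ P) P.subtype_injective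
    P.mkQ_surjective
  rcases subsingleton_or_nontrivial (M ⧸ P) with hsub | hnontriv
  · rw [Module.support_eq_empty_iff.2 hsub, Set.union_empty] at hunion
    have : Subsingleton (Module.support R M) :=
      (Set.subsingleton_singleton.anti (hunion.trans_subset hP)).coe_sort
    exact absurd Order.krullDim_nonpos_of_subsingleton hM.not_ge
  · have hle := hP.trans (Set.singleton_subset_iff.2 (closedPoint_mem_support R (M ⧸ P)))
    rw [Module.supportDim, Module.supportDim, hunion, Set.union_eq_right.2 hle]

theorem supportDim_quotSMulTop_lt [IsNoetherianRing R] [Module.Finite R M] {y : R}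
    (hy : y ∈ maximalIdeal R) (hreg : IsSMulRegular M y) {d : ℕ}
    (hd : Module.supportDim R M < (d + 1 : ℕ)) : Module.supportDim R (QuotSMulTop y M) < d := by
  rw [← Module.supportDim_quotSMulTop_succ_eq_supportDim hreg hy, Nat.cast_add_one] at hd
  exact lt_of_add_lt_add_right hd

end Dimension

namespace LocalCoh

open scoped Pointwise

variable {R : Type u} [CommRing R] [IsNoetherianRing R] [IsLocalRing R] {I : Ideal R} {M : Type u}
  [AddCommGroup M] [Module R M] [Module.Finite R M]

theorem subsingleton_of_supportDim_lt (hM : IsIdealOfDefinition I M) {i : ℕ}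
    (hi : Module.supportDim R M < i) : Subsingleton (LocalCoh I i M) := by
  induction i generalizing M with
  | zero =>
    have : Subsingleton M :=
      (Module.supportDim_eq_bot_iff_subsingleton R M).1 (WithBot.lt_coe_bot.1 hi)
    exact subsingleton_zero_iff.2 (Subsingleton.elim _ _)
  | succ i ih =>
    have hM' := hM.quotient (I.primaryComponent M)
    obtain ⟨y, hy, hreg, -⟩ := exists_isSMulRegular_forall_notMem hM.le_maximalIdeal
      (primaryComponent_quotient_primaryComponent I M) ∅ (by simp)
    have := ih (hM'.quotient (y • ⊤))
      (supportDim_quotSMulTop_lt hy hreg ((Module.supportDim_le_of_surjective _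
        (Submodule.mkQ_surjective _)).trans_lt hi))
    obtain ⟨φ, hφ⟩ := exists_range_eq_torsionBy hreg I i
    have hyreg : IsSMulRegular (LocalCoh I (i + 1) (M ⧸ I.primaryComponent M)) y := by
      rw [isSMulRegular_iff_torsionBy_eq_bot, ← hφ, Subsingleton.elim φ 0, LinearMap.range_zero]
    have : Subsingleton (LocalCoh I (i + 1) (M ⧸ I.primaryComponent M)) :=
      subsingleton_of_forall_eq 0 fun z => by
        obtain ⟨n, hn⟩ := hM'.exists_pow_smul_eq_zero hy z
        exact (hyreg.pow n).right_eq_zero_of_smul hn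
    exact (bijective_map_mkQ_primaryComponent I i M).1.subsingleton

theorem isArtinian (hM : IsIdealOfDefinition I M) (i : ℕ) : IsArtinian R (LocalCoh I i M) := by
  induction i generalizing M with
  | zero =>
    have : IsArtinian R (I.primaryComponent M) :=
      (finite_iff_isArtinian hM.maximalIdeal_le_radical_annihilator_primaryComponent).1
        inferInstance
    rw [← range_ι] at this
    exact isArtinian_of_linearEquiv (LinearEquiv.ofInjective _ (ι_injective I M)).symm
  | succ i ih =>
    have hM' := hM.quotient (I.primaryComponent M)
    obtain ⟨y, hy, hreg, -⟩ := exists_isSMulRegular_forall_notMem hM.le_maximalIdeal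
      (primaryComponent_quotient_primaryComponent I M) ∅ (by simp)
    have := ih (hM'.quotient (y • ⊤))
    obtain ⟨φ, hφ⟩ := exists_range_eq_torsionBy hreg I i
    have hker : IsArtinian R (LinearMap.range φ) :=
      isArtinian_of_surjective _ φ.rangeRestrict φ.surjective_rangeRestrict
    rw [hφ] at hker
    have : IsArtinian R (LocalCoh I (i + 1) (M ⧸ I.primaryComponent M)) :=
      isArtinian_of_isArtinian_torsionBy y (hM'.exists_pow_smul_eq_zero hy)
    exact isArtinian_of_injective _ (bijective_map_mkQ_primaryComponent I i M).1

theorem subsingleton_of_finite (hM : IsIdealOfDefinition I M) {n : ℕ}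
    (hn : Module.supportDim R M ≤ (n + 1 : ℕ)) [Module.Finite R (LocalCoh I (n + 1) M)] :
    Subsingleton (LocalCoh I (n + 1) M) := by
  have hM' := hM.quotient (I.primaryComponent M)
  obtain ⟨y, hy, hreg, -⟩ := exists_isSMulRegular_forall_notMem hM.le_maximalIdeal
    (primaryComponent_quotient_primaryComponent I M) ∅ (by simp)
  have hbij := bijective_map_mkQ_primaryComponent I n M
  have := Module.Finite.of_surjective _ hbij.2
  have hlt : Module.supportDim R (M ⧸ I.primaryComponent M) < (n + 1 + 1 : ℕ) :=
    ((Module.supportDim_le_of_surjective _ (Submodule.mkQ_surjective _)).trans hn).trans_lt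
      (by exact_mod_cast Nat.lt_succ_self (n + 1))
  have := subsingleton_of_supportDim_lt (hM'.quotient (y • ⊤))
    (supportDim_quotSMulTop_lt hy hreg hlt)
  have htop : (⊤ : Submodule R (LocalCoh I (n + 1) (M ⧸ I.primaryComponent M))) = y • ⊤ := by
    rw [← ker_map_mkQ_smul_top hreg, eq_comm, LinearMap.ker_eq_top]
    exact Subsingleton.elim _ _
  have : Subsingleton (LocalCoh I (n + 1) (M ⧸ I.primaryComponent M)) := by
    by_contra hnontriv
    rw [not_subsingleton_iff_nontrivial] at hnontriv
    exact Submodule.top_ne_pointwise_smul_of_mem_jacobson_annihilator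
      (maximalIdeal_le_jacobson _ hy) htop
  exact hbij.1.subsingleton

theorem exists_isSMulRegular_finite_quotSMulTop (hM : IsIdealOfDefinition I M)
    (hΓ : I.primaryComponent M = ⊥) {i : ℕ} (hi : Subsingleton (LocalCoh I (i + 1) M)) :
    ∃ y ∈ maximalIdeal R, IsSMulRegular M y ∧
      Module.Finite R (LocalCoh I i (QuotSMulTop y M)) := by
  have := isArtinian hM i
  obtain ⟨F, hF, hFG⟩ := exists_finset_isPrime_forall_exists_fg (R := R) (N := LocalCoh I i M)
  obtain ⟨y, hy, hreg, hyF⟩ := exists_isSMulRegular_forall_notMem hM.le_maximalIdeal hΓ F hF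
  obtain ⟨G, hG, hGy⟩ := hFG y hyF
  refine ⟨y, hy, hreg, ⟨?_⟩⟩
  have hπ := LinearMap.range_eq_top.2 (map_mkQ_smul_top_surjective hreg I i hi)
  have hmap : G.map (map I i (y • (⊤ : Submodule R M)).mkQ) = ⊤ :=
    (LinearMap.map_eq_top_iff hπ).2 (by rwa [ker_map_mkQ_smul_top hreg])
  exact hmap ▸ hG.map _

theorem nontrivial_of_supportDim_eq (hM : IsIdealOfDefinition I M) {d : ℕ}
    (hd : Module.supportDim R M = d) : Nontrivial (LocalCoh I d M) := by
  rw [← not_subsingleton_iff_nontrivial]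
  intro h
  induction d generalizing M with
  | zero =>
    obtain ⟨y, hy, hreg, -⟩ := exists_isSMulRegular_forall_notMem hM.le_maximalIdeal
      (subsingleton_zero_iff.1 h) ∅ (by simp)
    have hdy := Module.supportDim_quotSMulTop_succ_eq_supportDim hreg hy
    rw [hd, Nat.cast_zero] at hdy
    have hbot := (ENat.WithBot.add_one_le_zero_iff _).1 hdy.le
    rw [hbot] at hdy
    exact WithBot.bot_ne_coe hdy
  | succ d ih =>
    have hM' := hM.quotient (I.primaryComponent M)
    have hΓ := primaryComponent_quotient_primaryComponent I M
    have hd' : Module.supportDim R (M ⧸ I.primaryComponent M) = (d + 1 : ℕ) := hd ▸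
      supportDim_quotient_eq (support_subset_closedPoint
        hM.maximalIdeal_le_radical_annihilator_primaryComponent) (hd ▸ Nat.cast_pos.2 d.succ_pos)
    have h' := (bijective_map_mkQ_primaryComponent I d M).2.subsingleton
    obtain ⟨y, hy, hreg, hfin⟩ := exists_isSMulRegular_finite_quotSMulTop hM' hΓ h'
    have hMy := hM'.quotient (y • ⊤)
    have hdy : Module.supportDim R (QuotSMulTop y (M ⧸ I.primaryComponent M)) = d := by
      rw [← ENat.WithBot.add_one_cancel,
        Module.supportDim_quotSMulTop_succ_eq_supportDim hreg hy, hd', Nat.cast_add_one]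
    refine ih hMy hdy ?_
    cases d with
    | zero =>
      have := subsingleton_zero_iff.2 hΓ
      exact (map_mkQ_smul_top_surjective hreg I 0 h').subsingleton
    | succ n => exact subsingleton_of_finite hMy hdy.le

end LocalCoh

/-- If `x₁, …, x_r` is a part of a system of parameters of a finitely generated module `M`
of dimension `d` over a Noetherian local ring (i.e. the first `r` members of a full system
of parameters `x₁, …, x_d`), then `H^r_{(x₁, …, x_r)}(M) ≠ 0`. -/
theorem localCohomology_ne_zero_of_part_of_system_of_parameters
    {R : Type u} [CommRing R] [IsNoetherianRing R] [IsLocalRing R]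
    {M : Type u} [AddCommGroup M] [Module R M] [Module.Finite R M]
    {d : ℕ} (hd : moduleDim R M = d)
    (x : Fin d → R) (hx : IsSystemOfParameters M x)
    (r : ℕ) (hr : r ≤ d) :
    Nontrivial ((localCohomology
        (Ideal.span (Set.range fun i : Fin r => x (Fin.castLE hr i))) r).obj
      (ModuleCat.of R M)) := by
  have hM : IsIdealOfDefinition (Ideal.span (Set.range x)) M :=
    .of_isFiniteLength (Ideal.span_le.2 (Set.range_subset_iff.2 hx.1)) hx.2
  have hdim : Module.supportDim R M = d :=
    (Module.supportDim_eq_ringKrullDim_quotient_annihilator R M).trans hd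
  by_contra hzero
  have htop : Subsingleton (LocalCoh (Ideal.span (Set.range x)) d M) :=
    LocalCoh.subsingleton_span_range_of_castLE M hr x
      (LocalCoh.subsingleton_of_localCohomology _ r M (not_nontrivial_iff_subsingleton.1 hzero))
  exact not_subsingleton_iff_nontrivial.2 (LocalCoh.nontrivial_of_supportDim_eq hM hdim) htop
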